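/- arXiv:1608.08580 — 2 statements merged into one kernel-verified Lean document; each statement's English description precedes it below -/
import Mathlib

section
/- Let R be a Noetherian commutative ring of finite Krull dimension d and M a finitely generated R-module. Then for each n ∈ ℕ, n·frk(M) ≤ frk(M^{⊕n}) ≤ n·frk(M) + n·d, where frk denotes the maximal rank of a free direct summand. -/
/-- The free rank of a module: the maximal rank of a free direct summand. -/
noncomputable def frk (R M : Type*) [Ring R] [AddCommGroup M] [Module R M] : ℕ :=
  sSup {n : ℕ | ∃ N N' : Submodule R M, IsCompl N N' ∧ Nonempty (N ≃ₗ[R] (Fin n → R))}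

lemma Ideal.exists_prime_lt_or_exists_mul_pow_mem {R : Type*} [CommRing R] {I P : Ideal R}
    [P.IsPrime] {b : R} (hb : b ∈ P) :
    (∃ Q : Ideal R, Q.IsPrime ∧ I ≤ Q ∧ Q < P) ∨ ∃ s ∉ P, ∃ k : ℕ, s * b ^ k ∈ I := by
  by_cases h : Disjoint (I : Set R) (P.primeCompl ⊔ Submonoid.powers b : Submonoid R)
  · left
    obtain ⟨Q, hQ, hIQ, hdis⟩ := Ideal.exists_le_prime_disjoint I _ h
    rw [Set.disjoint_left] at hdis
    refine ⟨Q, hQ, hIQ, lt_of_le_of_ne (fun x hx => ?_) ?_⟩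
    · by_contra hxP
      exact hdis hx ((le_sup_left : P.primeCompl ≤ _) hxP)
    · rintro rfl
      exact hdis hb ((le_sup_right : Submonoid.powers b ≤ _) (Submonoid.mem_powers b))
  · right
    obtain ⟨x, hxI, hx⟩ := Set.not_disjoint_iff.mp h
    obtain ⟨s, hs, t, ⟨k, rfl⟩, rfl⟩ := Submonoid.mem_sup.mp hx
    exact ⟨s, hs, k, hxI⟩

/-- **Kronecker's theorem**: if every chain of primes above `I` has length less than `n`, then
`a, b₁, …, bₙ` generate, up to radical modulo `I`, an ideal generated by `n` elements
`bᵢ + a xᵢ`. -/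
lemma exists_forall_prime_mem_of_add_mul_mem {R : Type*} [CommRing R] (n : ℕ) (I : Ideal R)
    (hI : ∀ l : LTSeries (PrimeSpectrum R), I ≤ l.head.asIdeal → l.length < n)
    (a : R) (b : Fin n → R) :
    ∃ x : Fin n → R, ∀ P : Ideal R, P.IsPrime → I ≤ P → (∀ i, b i + a * x i ∈ P) → a ∈ P := by
  induction n generalizing I with
  | zero =>
    exact ⟨0, fun P hP hIP _ =>
      absurd (hI (RelSeries.singleton _ ⟨P, hP⟩) hIP) (Nat.not_lt_zero _)⟩
  | succ n ih =>
    set C : Ideal R := Submodule.comap (LinearMap.mulLeft R (b 0)) I.radical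
    have mem_C (s : R) : s ∈ C ↔ b 0 * s ∈ I.radical := Iff.rfl
    have hIC : I ≤ C := fun s hs => (mem_C s).2 (Ideal.mul_mem_left _ _ (Ideal.le_radical hs))
    obtain ⟨x, hx⟩ := ih (C ⊔ Ideal.span {b 0}) (fun l hl => by
      have hb : b 0 ∈ l.head.asIdeal :=
        hl (le_sup_right (a := C) (Ideal.mem_span_singleton_self (b 0)))
      have hCl : C ≤ l.head.asIdeal := le_sup_left.trans hl
      rcases Ideal.exists_prime_lt_or_exists_mul_pow_mem (I := I) hb with
        ⟨Q, hQ, hIQ, hlt⟩ | ⟨s, hs, k, hk⟩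
      · have := hI (l.cons ⟨Q, hQ⟩ hlt) (by simpa using hIQ)
        simp at this
        lia
      · refine absurd (hCl ((mem_C s).2 ⟨k + 1, ?_⟩)) hs
        have : (b 0 * s) ^ (k + 1) = b 0 * s ^ k * (s * b 0 ^ k) := by ring
        rw [this]
        exact Ideal.mul_mem_left _ _ hk) (fun i => b i.succ)
    have hrad : a ∈ ((C ⊔ Ideal.span {b 0}) ⊔
        Ideal.span (Set.range fun i => b i.succ + a * x i)).radical := by
      rw [Ideal.radical_eq_sInf, Ideal.mem_sInf]
      rintro P ⟨hle, hP⟩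
      exact hx P hP (le_sup_left.trans hle) fun i =>
        hle (le_sup_right (a := C ⊔ Ideal.span {b 0}) (Ideal.subset_span ⟨i, rfl⟩))
    obtain ⟨k, hk⟩ := hrad
    obtain ⟨y, hy, z, hz, hyz⟩ := Submodule.mem_sup.mp hk
    obtain ⟨s, hs, t, ht, rfl⟩ := Submodule.mem_sup.mp hy
    refine ⟨Fin.cons s x, fun P hP hIP hmem => ?_⟩
    have h0 : b 0 + a * s ∈ P := by simpa using hmem 0
    have hzP : z ∈ P := by
      refine (Ideal.span_le.2 ?_ : _ ≤ P) hz
      rintro _ ⟨i, rfl⟩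
      simpa using hmem i.succ
    have key (hb : b 0 ∈ P) (hs : s ∈ P) : a ∈ P := by
      refine hP.mem_of_pow_mem k ?_
      rw [← hyz]
      exact P.add_mem (P.add_mem hs ((P.span_singleton_le_iff_mem.2 hb) ht)) hzP
    rcases hP.mem_or_mem (hP.radical_le_iff.2 hIP ((mem_C s).1 hs)) with hb | hsP
    · rcases hP.mem_or_mem ((P.add_mem_iff_right hb).1 h0) with h | h
      exacts [h, key hb h]
    · exact key ((P.add_mem_iff_left (P.mul_mem_left a hsP)).1 h0) hsP

namespace Matrix

variable {m n : Type*}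

lemma rank_add_le {K : Type*} [Field K] [Fintype m] [Fintype n] (A B : Matrix m n K) :
    (A + B).rank ≤ A.rank + B.rank := by
  unfold rank
  rw [mulVecLin_add]
  exact (Submodule.finrank_mono (LinearMap.range_add_le _ _)).trans
    (Submodule.finrank_add_le_finrank_add_finrank _ _)

lemma rank_sum_le {K ι : Type*} [Field K] [Fintype m] [Fintype n] (s : Finset ι)
    (A : ι → Matrix m n K) : (∑ i ∈ s, A i).rank ≤ ∑ i ∈ s, (A i).rank := by
  classical
  induction s using Finset.induction_on with
  | empty => simp
  | insert i s hi ih =>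
    rw [Finset.sum_insert hi, Finset.sum_insert hi]
    exact (rank_add_le _ _).trans (by gcongr)

lemma exists_linearIndependent_row_submatrix {K : Type*} [Field K] [Fintype m] [Fintype n]
    (A : Matrix m n K) {r : ℕ} (hr : r ≤ A.rank) :
    ∃ f : Fin r → m, LinearIndependent K (A.submatrix f id).row := by
  rw [rank_eq_finrank_span_row] at hr
  obtain ⟨g, hg, -, hli⟩ := Submodule.exists_fun_fin_finrank_span_eq K (Set.range A.row)
  choose f hf using hg
  refine ⟨f ∘ Fin.castLE hr, ?_⟩
  have hrow : (A.submatrix (f ∘ Fin.castLE hr) id).row = g ∘ Fin.castLE hr :=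
    funext fun i => hf (Fin.castLE hr i)
  rw [hrow]
  exact hli.comp _ (Fin.castLE_injective hr)

lemma exists_det_submatrix_ne_zero {K : Type*} [Field K] [Fintype m] [Fintype n]
    (A : Matrix m n K) {r : ℕ} (hr : r ≤ A.rank) :
    ∃ (f : Fin r → m) (g : Fin r → n), (A.submatrix f g).det ≠ 0 := by
  obtain ⟨f, hf⟩ := A.exists_linearIndependent_row_submatrix hr
  have hr' : r ≤ ((A.submatrix f id)ᵀ).rank := by
    rw [rank_transpose, hf.rank_matrix, Fintype.card_fin]
  obtain ⟨g, hg⟩ := exists_linearIndependent_row_submatrix _ hr'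
  refine ⟨f, g, ?_⟩
  rw [linearIndependent_rows_iff_isUnit, isUnit_iff_isUnit_det, isUnit_iff_ne_zero] at hg
  rwa [← det_transpose]

end Matrix

section

variable {R : Type*} [CommRing R] {m n : Type*} [Fintype n]

open Matrix

lemma exists_mulVec_forall_det_mem {r : ℕ}
    (hR : ∀ l : LTSeries (PrimeSpectrum R), l.length < r) (A : Matrix m n R) (f : Fin r → m)
    (g : Fin r → n) (w : n → R) :
    ∃ w' : n → R, ∀ P : Ideal R, P.IsPrime → (∀ i, (A *ᵥ w') i ∈ P) →
      (A.submatrix f g).det ∈ P ∧ ∀ i, (A *ᵥ w) i ∈ P := by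
  classical
  set G := A.submatrix f g
  obtain ⟨y, hy⟩ := exists_forall_prime_mem_of_add_mul_mem r ⊥ (fun l _ => hR l) (G.det ^ 2)
    (G.adjugate *ᵥ fun i => (A *ᵥ w) (f i))
  have hAE : A * (1 : Matrix n n R).submatrix id g = A.submatrix id g := by
    ext i j
    simp [mul_apply, one_apply]
  have hsum : A *ᵥ (w + G.det • ((1 : Matrix n n R).submatrix id g *ᵥ y)) =
      A *ᵥ w + G.det • (A.submatrix id g *ᵥ y) := by
    rw [mulVec_add, mulVec_smul, mulVec_mulVec, hAE]
  refine ⟨w + G.det • ((1 : Matrix n n R).submatrix id g *ᵥ y), fun P hP hmem => ?_⟩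
  rw [hsum] at hmem
  have hdet : G.det ∈ P := by
    refine hP.mem_of_pow_mem 2 (hy P hP bot_le fun i => ?_)
    have hGy : (G.adjugate *ᵥ fun i => (A *ᵥ w) (f i)) + G.det ^ 2 • y =
        G.adjugate *ᵥ fun i => (A *ᵥ w + G.det • (A.submatrix id g *ᵥ y)) (f i) := by
      have hfun : (fun i => (A *ᵥ w + G.det • (A.submatrix id g *ᵥ y)) (f i)) =
          (fun i => (A *ᵥ w) (f i)) + G.det • (G *ᵥ y) := rfl
      rw [hfun, mulVec_add, mulVec_smul, mulVec_mulVec, adjugate_mul, smul_mulVec, one_mulVec,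
        smul_smul, sq]
    have := congrFun hGy i
    rw [Pi.add_apply, Pi.smul_apply, smul_eq_mul] at this
    rw [this, mulVec, dotProduct]
    exact P.sum_mem fun j _ => P.mul_mem_left _ (hmem (f j))
  exact ⟨hdet, fun i => (P.add_mem_iff_left (P.mul_mem_right _ hdet)).1 (hmem i)⟩

lemma exists_mulVec_forall_mem_finset {r : ℕ}
    (hR : ∀ l : LTSeries (PrimeSpectrum R), l.length < r) (A : Matrix m n R)
    (S : Finset ((Fin r → m) × (Fin r → n))) :
    ∃ w : n → R, ∀ P : Ideal R, P.IsPrime → (∀ i, (A *ᵥ w) i ∈ P) →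
      ∀ s ∈ S, (A.submatrix s.1 s.2).det ∈ P := by
  classical
  induction S using Finset.induction_on with
  | empty => exact ⟨0, by simp⟩
  | insert s S hs ih =>
    obtain ⟨w, hw⟩ := ih
    obtain ⟨w', hw'⟩ := exists_mulVec_forall_det_mem hR A s.1 s.2 w
    refine ⟨w', fun P hP hmem t ht => ?_⟩
    obtain ⟨hdet, hAw⟩ := hw' P hP hmem
    rcases Finset.mem_insert.1 ht with rfl | ht
    exacts [hdet, hw P hP hAw t ht]

variable [Fintype m]

/-- If `A` has rank larger than `dim R` at every prime, some combination of its columns is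
unimodular. -/
lemma exists_dotProduct_mulVec_eq_one {r : ℕ}
    (hR : ∀ l : LTSeries (PrimeSpectrum R), l.length < r) (A : Matrix m n R)
    (hA : ∀ (P : Ideal R) [P.IsPrime], r ≤ (A.map (algebraMap R P.ResidueField)).rank) :
    ∃ (u : m → R) (w : n → R), u ⬝ᵥ A *ᵥ w = 1 := by
  classical
  obtain ⟨w, hw⟩ := exists_mulVec_forall_mem_finset hR A Finset.univ
  have htop : Ideal.span (Set.range (A *ᵥ w)) = ⊤ := by
    by_contra hne
    obtain ⟨P, hP, hle⟩ := Ideal.exists_le_maximal _ hne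
    have := hP.isPrime
    obtain ⟨f, g, hfg⟩ := exists_det_submatrix_ne_zero _ (hA P)
    apply hfg
    rw [submatrix_map, ← RingHom.mapMatrix_apply, ← RingHom.map_det,
      Ideal.algebraMap_residueField_eq_zero]
    exact hw P this (fun i => hle (Ideal.subset_span ⟨i, rfl⟩)) (f, g) (Finset.mem_univ _)
  obtain ⟨u, hu⟩ := Ideal.mem_span_range_iff_exists_fun.1 ((Ideal.eq_top_iff_one _).1 htop)
  exact ⟨u, w, hu⟩

lemma exists_mul_mul_eq_one_succ {s : ℕ} (A : Matrix m n R) {u : Matrix (Fin 1) m R}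
    {v : Matrix n (Fin 1) R} (huv : u * A * v = 1) {U : Matrix (Fin s) m R}
    {V : Matrix n (Fin s) R} (hUV : U * (A - A * v * u * A) * V = 1) :
    ∃ (U' : Matrix (Fin (s + 1)) m R) (V' : Matrix n (Fin (s + 1)) R), U' * A * V' = 1 := by
  have h₁ : u * (A * v) = 1 := by rw [← Matrix.mul_assoc, huv]
  let U₁ := U - U * (A * v) * u
  let V₁ := V - v * (u * (A * V))
  have h12 : u * A * V₁ = 0 := by
    simp only [V₁, Matrix.mul_sub, Matrix.mul_assoc]
    rw [← Matrix.mul_assoc A v, ← Matrix.mul_assoc u (A * v), h₁, Matrix.one_mul, sub_self]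
  have h21 : U₁ * A * v = 0 := by
    simp only [U₁, Matrix.sub_mul, Matrix.mul_assoc]
    rw [h₁, Matrix.mul_one, sub_self]
  have h22 : U₁ * A * V₁ = 1 := by
    have : U₁ * A * V₁ = U * A * V₁ - U * (A * v) * (u * A * V₁) := by
      simp only [U₁, Matrix.sub_mul, Matrix.mul_assoc]
    rw [this, h12, Matrix.mul_zero, sub_zero, ← hUV]
    simp only [V₁, Matrix.mul_sub, Matrix.sub_mul, Matrix.mul_assoc]
  refine ⟨(fromRows U₁ u).submatrix finSumFinEquiv.symm id,
    (fromCols V₁ v).submatrix id finSumFinEquiv.symm, ?_⟩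
  have hblock : fromRows U₁ u * A * fromCols V₁ v = 1 := by
    rw [fromRows_mul, fromRows_mul_fromCols, h22, h21, h12, huv, fromBlocks_one]
  calc _ = (fromRows U₁ u * A * fromCols V₁ v).submatrix finSumFinEquiv.symm
        finSumFinEquiv.symm := rfl
    _ = 1 := by rw [hblock, submatrix_one_equiv]

lemma exists_mul_mul_eq_one {d : ℕ} (hR : ∀ l : LTSeries (PrimeSpectrum R), l.length ≤ d) (s : ℕ)
    (A : Matrix m n R)
    (hA : ∀ (P : Ideal R) [P.IsPrime], d + s ≤ (A.map (algebraMap R P.ResidueField)).rank) :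
    ∃ (U : Matrix (Fin s) m R) (V : Matrix n (Fin s) R), U * A * V = 1 := by
  induction s generalizing A with
  | zero => exact ⟨0, 0, Subsingleton.elim _ _⟩
  | succ s ih =>
    obtain ⟨u, v, huv⟩ := exists_dotProduct_mulVec_eq_one (r := d + 1)
      (fun l => Nat.lt_succ_of_le (hR l)) A fun P _ => le_trans (by lia) (hA P)
    have huv' : replicateRow (Fin 1) u * A * replicateCol (Fin 1) v = 1 := by
      rw [Matrix.mul_assoc, ← replicateCol_mulVec]
      ext i j
      rw [Subsingleton.elim i j, one_apply_eq, ← huv]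
      rfl
    obtain ⟨U, V, hUV⟩ := ih (A - A * replicateCol (Fin 1) v * replicateRow (Fin 1) u * A)
      fun P _ => by
        set φ := algebraMap R P.ResidueField
        set B := A * replicateCol (Fin 1) v * replicateRow (Fin 1) u * A with hB
        have hrank : (B.map φ).rank ≤ 1 := by
          rw [hB, Matrix.mul_assoc, Matrix.map_mul]
          exact (rank_mul_le_left _ _).trans ((rank_le_card_width _).trans (by simp))
        have hsplit : A.map φ = (A - B).map φ + B.map φ := by
          ext i j
          simp
        have := hA P
        have := rank_add_le ((A - B).map φ) (B.map φ)
        rw [← hsplit] at this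
        lia
    exact exists_mul_mul_eq_one_succ A huv' hUV

end

section FreeRank

variable {R M : Type*} [CommRing R] [AddCommGroup M] [Module R M]

lemma exists_isCompl_equiv_iff_exists_comp_eq_id (k : ℕ) :
    (∃ N N' : Submodule R M, IsCompl N N' ∧ Nonempty (N ≃ₗ[R] (Fin k → R))) ↔
      ∃ (i : (Fin k → R) →ₗ[R] M) (p : M →ₗ[R] (Fin k → R)), p ∘ₗ i = LinearMap.id := by
  constructor
  · rintro ⟨N, N', h, ⟨e⟩⟩
    refine ⟨N.subtype ∘ₗ e.symm, e ∘ₗ N.projectionOnto N' h, ?_⟩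
    ext x
    simp
  · rintro ⟨i, p, h⟩
    have hpi (x) : p (i x) = x := LinearMap.congr_fun h x
    refine ⟨LinearMap.range i, LinearMap.ker (i.rangeRestrict ∘ₗ p),
      LinearMap.isCompl_of_proj ?_,
      ⟨(LinearEquiv.ofInjective i (Function.LeftInverse.injective hpi)).symm⟩⟩
    rintro ⟨_, x, rfl⟩
    exact Subtype.ext (congrArg i (hpi x))

lemma bddAbove_frk_set [Nontrivial R] [Module.Finite R M] :
    BddAbove {k : ℕ | ∃ N N' : Submodule R M,
      IsCompl N N' ∧ Nonempty (N ≃ₗ[R] (Fin k → R))} := by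
  obtain ⟨a, f, hf⟩ := Module.Finite.exists_fin' R M
  refine ⟨a, fun k hk => ?_⟩
  obtain ⟨i, p, h⟩ := (exists_isCompl_equiv_iff_exists_comp_eq_id k).1 hk
  exact le_of_fin_surjective R (p ∘ₗ f)
    ((Function.RightInverse.surjective (g := i) fun x => LinearMap.congr_fun h x).comp hf)

lemma le_frk [Nontrivial R] [Module.Finite R M] {k : ℕ} {i : (Fin k → R) →ₗ[R] M}
    {p : M →ₗ[R] (Fin k → R)} (h : p ∘ₗ i = LinearMap.id) : k ≤ frk R M :=
  le_csSup bddAbove_frk_set ((exists_isCompl_equiv_iff_exists_comp_eq_id k).2 ⟨i, p, h⟩)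

variable (R M) in
lemma exists_comp_eq_id_frk [Nontrivial R] [Module.Finite R M] :
    ∃ (i : (Fin (frk R M) → R) →ₗ[R] M) (p : M →ₗ[R] (Fin (frk R M) → R)),
      p ∘ₗ i = LinearMap.id :=
  (exists_isCompl_equiv_iff_exists_comp_eq_id _).1 <| Nat.sSup_mem
    ⟨0, (exists_isCompl_equiv_iff_exists_comp_eq_id 0).2 ⟨0, 0, Subsingleton.elim _ _⟩⟩
    bddAbove_frk_set

lemma mul_frk_le_frk_pi [Nontrivial R] [Module.Finite R M] (n : ℕ) :
    n * frk R M ≤ frk R (Fin n → M) := by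
  obtain ⟨i, p, h⟩ := exists_comp_eq_id_frk R M
  let e : (Fin (n * frk R M) → R) ≃ₗ[R] (Fin n → Fin (frk R M) → R) :=
    LinearEquiv.funCongrLeft R R finProdFinEquiv ≪≫ₗ LinearEquiv.curry R R _ _
  refine le_frk (i := i.compLeft (Fin n) ∘ₗ e) (p := e.symm ∘ₗ p.compLeft (Fin n)) ?_
  have hpi (y : Fin n → Fin (frk R M) → R) : p.compLeft (Fin n) (i.compLeft (Fin n) y) = y :=
    funext fun k => LinearMap.congr_fun h (y k)
  refine LinearMap.ext fun x => ?_
  simp [hpi]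

variable (R M) in
/-- A finite module over a Noetherian ring has a universal map to and from finite free modules. -/
lemma exists_universal_maps [IsNoetherianRing R] [Module.Finite R M] :
    ∃ (a b : ℕ) (φ : M →ₗ[R] (Fin a → R)) (ψ : (Fin b → R) →ₗ[R] M),
      (∀ (k : ℕ) (p : M →ₗ[R] (Fin k → R)), ∃ u : (Fin a → R) →ₗ[R] (Fin k → R), u ∘ₗ φ = p) ∧
      ∀ (k : ℕ) (i : (Fin k → R) →ₗ[R] M), ∃ v : (Fin k → R) →ₗ[R] (Fin b → R), ψ ∘ₗ v = i := by
  obtain ⟨b, ψ, hψ⟩ := Module.Finite.exists_fin' R M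
  obtain ⟨a, f, hf⟩ := Module.Finite.exists_fin (R := R) (M := M →ₗ[R] R)
  refine ⟨a, b, LinearMap.pi f, ψ, fun k p => ?_,
    fun k i => Module.projective_lifting_property ψ i hψ⟩
  have hc (j : Fin k) : ∃ c : Fin a → R, ∑ l, c l • f l = LinearMap.proj j ∘ₗ p :=
    (Submodule.mem_span_range_iff_exists_fun R).1 (hf ▸ Submodule.mem_top)
  choose c hc using hc
  refine ⟨(Matrix.of c).mulVecLin, LinearMap.ext fun x => funext fun j => ?_⟩
  have := LinearMap.congr_fun (hc j) x
  simpa [Matrix.mulVec, dotProduct] using this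

open Matrix in
lemma frk_pi_le [IsNoetherianRing R] [Nontrivial R] [Module.Finite R M] {d : ℕ}
    (hR : ∀ l : LTSeries (PrimeSpectrum R), l.length ≤ d) (n : ℕ) :
    frk R (Fin n → M) ≤ n * (d + frk R M) := by
  obtain ⟨a, b, φ, ψ, hφ, hψ⟩ := exists_universal_maps R M
  set A := LinearMap.toMatrix' (φ ∘ₗ ψ) with hA
  obtain ⟨P, hP, hrank⟩ : ∃ (P : Ideal R) (_ : P.IsPrime),
      (A.map (algebraMap R P.ResidueField)).rank ≤ d + frk R M := by
    by_contra! hlt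
    obtain ⟨U, V, hUV⟩ := exists_mul_mul_eq_one hR (frk R M + 1) A fun P hP => hlt P hP
    refine (Nat.lt_irrefl _ (le_frk (M := M) (i := ψ ∘ₗ V.mulVecLin) (p := U.mulVecLin ∘ₗ φ) ?_))
    apply LinearMap.toMatrix'.injective
    rw [LinearMap.comp_assoc, ← LinearMap.comp_assoc _ ψ, LinearMap.toMatrix'_comp,
      LinearMap.toMatrix'_comp, ← hA, ← Matrix.mul_assoc]
    simpa [← Matrix.toLin'_apply'] using hUV
  obtain ⟨i, p, h⟩ := exists_comp_eq_id_frk R (Fin n → M)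
  choose u hu using fun k => hφ _ (p ∘ₗ LinearMap.single R (fun _ : Fin n => M) k)
  choose v hv using fun k => hψ _ (LinearMap.proj k ∘ₗ i)
  have hone : (1 : Matrix (Fin (frk R (Fin n → M))) (Fin (frk R (Fin n → M))) R) =
      ∑ k, LinearMap.toMatrix' (u k) * A * LinearMap.toMatrix' (v k) := by
    simp only [hA, ← LinearMap.toMatrix'_comp, ← LinearMap.toMatrix'_id, ← map_sum]
    congr 1
    rw [← h]
    refine LinearMap.ext fun x => ?_
    have (k : Fin n) : (u k) (φ (ψ (v k x))) = p (Pi.single k (i x k)) := by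
      rw [← LinearMap.comp_apply ψ, hv, ← LinearMap.comp_apply (u k), hu]
      rfl
    simp only [LinearMap.sum_apply, LinearMap.comp_apply, this]
    rw [← map_sum, Finset.univ_sum_single]
  set f := algebraMap R P.ResidueField
  have hone' : (1 : Matrix (Fin (frk R (Fin n → M))) (Fin (frk R (Fin n → M))) P.ResidueField) =
      ∑ k, (LinearMap.toMatrix' (u k)).map f * A.map f * (LinearMap.toMatrix' (v k)).map f := by
    have := congrArg f.mapMatrix hone
    simpa only [map_one, map_sum, RingHom.mapMatrix_apply, Matrix.map_mul] using this
  calc frk R (Fin n → M)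
      = (1 : Matrix (Fin (frk R (Fin n → M))) (Fin (frk R (Fin n → M))) P.ResidueField).rank := by
        rw [rank_one, Fintype.card_fin]
    _ ≤ ∑ k : Fin n, ((LinearMap.toMatrix' (u k)).map f * A.map f *
          (LinearMap.toMatrix' (v k)).map f).rank := hone' ▸ rank_sum_le _ _
    _ ≤ ∑ _k : Fin n, (d + frk R M) := Finset.sum_le_sum fun k _ =>
        ((rank_mul_le_left _ _).trans (rank_mul_le_right _ _)).trans hrank
    _ = n * (d + frk R M) := by simp

end FreeRank

/-- For a Noetherian ring `R` of finite Krull dimension `d` and a finitely generated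
module `M`, one has `n·frk(M) ≤ frk(M^{⊕n}) ≤ n·frk(M) + n·d` for every `n`. -/
theorem frk_pow_bounds {R : Type*} [CommRing R] [IsNoetherianRing R] (d : ℕ)
    (hd : ringKrullDim R = d) (M : Type*) [AddCommGroup M] [Module R M]
    [Module.Finite R M] (n : ℕ) :
    n * frk R M ≤ frk R (Fin n → M) ∧ frk R (Fin n → M) ≤ n * frk R M + n * d := by
  have : Nontrivial R := by
    by_contra h
    rw [not_nontrivial_iff_subsingleton] at h
    simp [ringKrullDim_eq_bot_of_subsingleton] at hd
  refine ⟨mul_frk_le_frk_pi n, (frk_pi_le (fun l => ?_) n).trans (by rw [Nat.mul_add, add_comm])⟩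
  have hl : (l.length : WithBot ℕ∞) ≤ d := hd ▸ Order.LTSeries.length_le_krullDim l
  exact_mod_cast hl
end

section
/- Let R be a Noetherian ring of finite Krull dimension and M' → M → M'' → 0 a right exact sequence of finitely generated R-modules. Then frk(M) ≤ frk(M') + μ(M'') + dim(R). -/
/-- The minimal number of generators of a module. -/
noncomputable def mu (R M : Type*) [Ring R] [AddCommGroup M] [Module R M] : ℕ :=
  sInf {n : ℕ | ∃ s : Finset M, s.card = n ∧ Submodule.span R (s : Set M) = ⊤}

namespace FreeRank

variable {R C : Type*} [CommRing R] [AddCommGroup C] [Module R C]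

/-- The elements of `C` that vanish in the fibre `C ⊗ κ(P)`. -/
def fiberKer (C : Type*) [AddCommGroup C] [Module R C] (P : PrimeSpectrum R) :
    Submodule R C where
  carrier := {x | ∃ f ∉ P.asIdeal, f • x ∈ P.asIdeal • (⊤ : Submodule R C)}
  zero_mem' := ⟨1, P.asIdeal.one_notMem, by simp⟩
  add_mem' := by
    rintro x y ⟨f, hf, hx⟩ ⟨g, hg, hy⟩
    refine ⟨f * g, P.isPrime.mul_notMem hf hg, ?_⟩
    have e : (f * g) • (x + y) = g • f • x + f • g • y := by module
    rw [e]
    exact add_mem (Submodule.smul_mem _ _ hx) (Submodule.smul_mem _ _ hy)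
  smul_mem' := by
    rintro r x ⟨f, hf, hx⟩
    exact ⟨f, hf, by rw [smul_comm]; exact Submodule.smul_mem _ _ hx⟩

theorem smul_mem_fiberKer {P : PrimeSpectrum R} {b : R} (hb : b ∈ P.asIdeal) (x : C) :
    b • x ∈ fiberKer C P :=
  ⟨1, P.asIdeal.one_notMem, by
    rw [one_smul]; exact Submodule.smul_mem_smul hb Submodule.mem_top⟩

theorem mem_fiberKer_of_smul_mem {P : PrimeSpectrum R} {b : R} (hb : b ∉ P.asIdeal) {x : C}
    (h : b • x ∈ fiberKer C P) : x ∈ fiberKer C P := by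
  obtain ⟨f, hf, hx⟩ := h
  exact ⟨f * b, P.isPrime.mul_notMem hf hb, by rwa [mul_smul]⟩

/-- `C` is generated by at most `j` elements of `C` after inverting some element outside `P`. -/
def LocallyGenerated (C : Type*) [AddCommGroup C] [Module R C] (P : PrimeSpectrum R)
    (j : ℕ) : Prop :=
  ∃ s : Finset C, s.card ≤ j ∧ ∃ f ∉ P.asIdeal, ∀ y : C, f • y ∈ Submodule.span R (s : Set C)

theorem LocallyGenerated.mono {P : PrimeSpectrum R} {i j : ℕ} (hij : i ≤ j)
    (h : LocallyGenerated C P i) : LocallyGenerated C P j := by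
  obtain ⟨s, hs, h⟩ := h
  exact ⟨s, hs.trans hij, h⟩

theorem LocallyGenerated.map {D : Type*} [AddCommGroup D] [Module R D] {P : PrimeSpectrum R}
    {j : ℕ} (q : C →ₗ[R] D) (hq : Function.Surjective q) (h : LocallyGenerated C P j) :
    LocallyGenerated D P j := by
  classical
  obtain ⟨s, hs, f, hf, h⟩ := h
  refine ⟨s.image q, Finset.card_image_le.trans hs, f, hf, fun y ↦ ?_⟩
  obtain ⟨y, rfl⟩ := hq y
  rw [← map_smul, Finset.coe_image, Submodule.span_image]
  exact Submodule.mem_map_of_mem (h y)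

theorem isClosed_setOf_not_locallyGenerated (j : ℕ) :
    IsClosed {P : PrimeSpectrum R | ¬ LocallyGenerated C P j} := by
  rw [← isOpen_compl_iff, isOpen_iff_mem_nhds]
  intro P hP
  simp only [Set.mem_compl_iff, Set.mem_ofPred_eq, not_not] at hP
  obtain ⟨s, hs, f, hf, h⟩ := hP
  filter_upwards [(PrimeSpectrum.basicOpen f).isOpen.mem_nhds hf] with Q hQ
  exact not_not.2 ⟨s, hs, f, hQ, h⟩

theorem LocallyGenerated.quotient_span_singleton {P : PrimeSpectrum R} {j : ℕ} {x : C}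
    (hx : x ∉ fiberKer C P) (h : LocallyGenerated C P (j + 1)) :
    LocallyGenerated (C ⧸ Submodule.span R {x}) P j := by
  classical
  obtain ⟨s, hs, f, hf, h⟩ := h
  obtain ⟨b, -, hb⟩ := Submodule.mem_span_finset.1 (h x)
  obtain ⟨i, hi, hbi⟩ : ∃ i ∈ s, b i ∉ P.asIdeal := by
    by_contra! hcon
    exact hx ⟨f, hf, hb ▸ Submodule.sum_mem _ fun i hi ↦
      Submodule.smul_mem_smul (hcon i hi) Submodule.mem_top⟩
  let q := (Submodule.span R {x}).mkQ
  have hqx : q x = 0 := by simp [q]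
  let N := Submodule.span R (((s.erase i).image q : Finset _) : Set (C ⧸ Submodule.span R {x}))
  have hmem : ∀ k ∈ s, b i • q k ∈ N := by
    intro k hk
    by_cases hki : k = i
    · subst hki
      have e : b k • q k = - ∑ l ∈ s.erase k, b l • q l := by
        rw [eq_neg_iff_add_eq_zero, Finset.add_sum_erase s (fun l ↦ b l • q l) hk]
        simpa [hqx] using congrArg q hb
      rw [e]
      exact neg_mem (Submodule.sum_mem _ fun l hl ↦ Submodule.smul_mem _ _
        (Submodule.subset_span (Finset.mem_coe.2 (Finset.mem_image_of_mem q hl))))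
    · exact Submodule.smul_mem _ _ (Submodule.subset_span
        (Finset.mem_coe.2 (Finset.mem_image_of_mem q (Finset.mem_erase.2 ⟨hki, hk⟩))))
  refine ⟨(s.erase i).image q, Finset.card_image_le.trans ?_, b i * f,
    P.isPrime.mul_notMem hbi hf, fun y ↦ ?_⟩
  · rw [Finset.card_erase_of_mem hi]; omega
  · obtain ⟨y, rfl⟩ := Submodule.mkQ_surjective _ y
    obtain ⟨e, -, he⟩ := Submodule.mem_span_finset.1 (h y)
    change (b i * f) • q y ∈ N
    rw [mul_smul, ← map_smul, ← he, map_sum, Finset.smul_sum]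
    refine Submodule.sum_mem _ fun k hk ↦ ?_
    rw [map_smul, smul_comm]
    exact Submodule.smul_mem _ _ (hmem k hk)

theorem locallyGenerated_zero_of_fiberKer_eq_top [Module.Finite R C] {P : PrimeSpectrum R}
    (h : fiberKer C P = ⊤) : LocallyGenerated C P 0 := by
  classical
  obtain ⟨s, hs⟩ := Module.Finite.fg_top (R := R) (M := C)
  have hmem : ∀ x : C, ∃ f ∉ P.asIdeal, f • x ∈ P.asIdeal • (⊤ : Submodule R C) := fun x ↦ by
    have : x ∈ fiberKer C P := h ▸ Submodule.mem_top
    exact this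
  choose f hf hfx using hmem
  let g := ∏ x ∈ s, f x
  have hg : g ∉ P.asIdeal := by
    simpa [g, P.isPrime.prod_mem_iff] using fun x _ ↦ hf x
  have hrange : LinearMap.range (algebraMap R (Module.End R C) g) ≤
      P.asIdeal • (⊤ : Submodule R C) := by
    rw [LinearMap.range_eq_map, ← hs, Submodule.map_span_le, hs]
    intro x hx
    simp only [Module.algebraMap_end_apply, g]
    rw [← Finset.prod_erase_mul s f hx, mul_smul]
    exact Submodule.smul_mem _ _ (hfx x)
  obtain ⟨p, hp, -, hcoeff, hp0⟩ :=
    LinearMap.exists_monic_and_natDegree_eq_and_coeff_mem_pow_and_aeval_eq_zero R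
      (algebraMap R (Module.End R C) g) P.asIdeal hrange
  rw [Polynomial.aeval_algebraMap_apply] at hp0
  refine ⟨∅, by simp, p.eval g, fun hmem ↦ hg ?_, fun y ↦ ?_⟩
  · rw [Polynomial.eval_eq_sum_range, Finset.sum_range_succ, hp.coeff_natDegree, one_mul,
      Ideal.add_mem_iff_right] at hmem
    · exact P.isPrime.mem_of_pow_mem _ hmem
    · refine Ideal.sum_mem _ fun k hk ↦ Ideal.mul_mem_right _ _ ?_
      have := Finset.mem_range.1 hk
      exact Ideal.pow_le_self (by omega) (hcoeff k)
  · have := LinearMap.congr_fun hp0 y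
    simpa using this

/-- Prime avoidance for fibres: a translate of `z` by an element of `N` is nonzero in finitely
many fibres at once. -/
theorem exists_add_notMem_fiberKer (N : Submodule R C) (z : C) (Λ : Finset (PrimeSpectrum R))
    (h : ∀ P ∈ Λ, z ∉ fiberKer C P ∨ ∃ w ∈ N, w ∉ fiberKer C P) :
    ∃ y ∈ N, ∀ P ∈ Λ, z + y ∉ fiberKer C P := by
  classical
  induction hn : Λ.card generalizing Λ with
  | zero =>
    obtain rfl := Finset.card_eq_zero.1 hn
    exact ⟨0, N.zero_mem, by simp⟩
  | succ n ih =>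
    obtain ⟨P, hP⟩ := Λ.exists_minimal (Finset.card_pos.1 (by omega))
    obtain ⟨y, hy, hyΛ⟩ := ih (Λ.erase P) (fun Q hQ ↦ h Q (Finset.mem_of_mem_erase hQ))
      (by rw [Finset.card_erase_of_mem hP.1]; omega)
    by_cases hzy : z + y ∈ fiberKer C P
    · obtain ⟨w, hw, hwP⟩ : ∃ w ∈ N, w ∉ fiberKer C P := by
        refine (h P hP.1).elim (fun hz ↦ ⟨y, hy, fun hyP ↦ hz ?_⟩) id
        simpa using sub_mem hzy hyP
      obtain ⟨b, hb, hbP⟩ : ∃ b ∈ (Λ.erase P).inf PrimeSpectrum.asIdeal, b ∉ P.asIdeal := by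
        by_contra! hcon
        obtain ⟨Q, hQ, hQP⟩ := P.isPrime.inf_le'.1 hcon
        rw [Finset.mem_erase] at hQ
        exact hQ.1 (hP.eq_of_le hQ.2 hQP)
      refine ⟨y + b • w, add_mem hy (N.smul_mem _ hw), fun Q hQ hmem ↦ ?_⟩
      rw [← add_assoc] at hmem
      by_cases hQP : Q = P
      · subst hQP
        exact hwP (mem_fiberKer_of_smul_mem hbP ((Submodule.add_mem_iff_right _ hzy).1 hmem))
      · have hQ' := Finset.mem_erase.2 ⟨hQP, hQ⟩
        have hbQ : b ∈ Q.asIdeal := (Submodule.mem_finsetInf.1 hb) Q hQ'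
        exact hyΛ Q hQ' ((Submodule.add_mem_iff_left _ (smul_mem_fiberKer hbQ w)).1 hmem)
    · refine ⟨y, hy, fun Q hQ ↦ ?_⟩
      by_cases hQP : Q = P
      · exact hQP ▸ hzy
      · exact hyΛ Q (Finset.mem_erase.2 ⟨hQP, hQ⟩)

/-- The Forster-Swan bound: `μ_P(C) + dim R/P ≤ n` at all primes `P` in the support of `C`. -/
def ForsterBound (R C : Type*) [CommRing R] [AddCommGroup C] [Module R C] (n : ℕ) : Prop :=
  ∀ (P : PrimeSpectrum R) (j : ℕ), ¬ LocallyGenerated C P j →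
    (j : ℕ∞) + 1 + Order.coheight P ≤ n

theorem ForsterBound.subsingleton (h : ForsterBound R C 0) : Subsingleton C := by
  have hloc : ∀ P : PrimeSpectrum R, LocallyGenerated C P 0 := by
    intro P
    by_contra hP
    simpa using h P 0 hP
  have htop : Module.annihilator R C = ⊤ := by
    by_contra hne
    obtain ⟨m, hm, hle⟩ := Ideal.exists_le_maximal _ hne
    obtain ⟨s, hs, f, hf, hspan⟩ := hloc ⟨m, hm.isPrime⟩
    obtain rfl : s = ∅ := by simpa using hs
    exact hf (hle (Module.mem_annihilator.2 fun y ↦ by simpa using hspan y))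
  exact Module.annihilator_eq_top_iff.1 htop

theorem ForsterBound.exists_quotient [IsNoetherianRing R] [Module.Finite R C] {n : ℕ}
    (h : ForsterBound R C (n + 1)) (N : Submodule R C) (z : C)
    (hN : N ⊔ Submodule.span R {z} = ⊤) :
    ∃ y ∈ N, ForsterBound R (C ⧸ Submodule.span R {z + y}) n := by
  classical
  have hclosed := fun j ↦ (PrimeSpectrum.isClosed_iff_zeroLocus_ideal _).1
    (isClosed_setOf_not_locallyGenerated (R := R) (C := C) j)
  choose I hI using hclosed
  have hmemI : ∀ (P : PrimeSpectrum R) j, ¬ LocallyGenerated C P j ↔ I j ≤ P.asIdeal := by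
    intro P j
    exact Set.ext_iff.1 (hI j) P
  let T : Set (PrimeSpectrum R) :=
    ⋃ j ∈ Finset.range (n + 1), PrimeSpectrum.asIdeal ⁻¹' (I j).minimalPrimes
  have hT : T.Finite := Set.Finite.biUnion (Finset.finite_toSet _) fun j _ ↦
    (Ideal.finite_minimalPrimes_of_isNoetherianRing R (I j)).preimage
      fun _ _ _ _ hPQ ↦ PrimeSpectrum.ext hPQ
  obtain ⟨y, hy, hyT⟩ := exists_add_notMem_fiberKer N z hT.toFinset fun P hP ↦ by
    by_contra! hcon
    simp only [T, Set.Finite.mem_toFinset, Set.mem_iUnion, Set.mem_preimage] at hP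
    obtain ⟨j, -, hj⟩ := hP
    refine (hmemI P j).2 hj.1.2 (LocallyGenerated.mono j.zero_le
      (locallyGenerated_zero_of_fiberKer_eq_top (top_le_iff.1 ?_)))
    rw [← hN, sup_le_iff, Submodule.span_singleton_le_iff_mem]
    exact ⟨hcon.2, hcon.1⟩
  refine ⟨y, hy, fun Q j hQ ↦ ?_⟩
  have hCQ : ¬ LocallyGenerated C Q j := fun hC ↦
    hQ (hC.map _ (Submodule.mkQ_surjective _))
  refine (ENat.add_le_add_iff_right ENat.one_ne_top).1 ?_
  by_cases hz : z + y ∈ fiberKer C Q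
  · obtain ⟨p, hp, hpQ⟩ := Ideal.exists_minimalPrimes_le ((hmemI Q j).1 hCQ)
    let P : PrimeSpectrum R := ⟨p, hp.1.1⟩
    have hCP : ¬ LocallyGenerated C P j := (hmemI P j).2 hp.1.2
    have hbound := h P j hCP
    have hjn : j < n + 1 := by
      have := le_self_add.trans hbound
      norm_cast at this
    have hPT : P ∈ hT.toFinset := by
      simp only [T, Set.Finite.mem_toFinset, Set.mem_iUnion, Set.mem_preimage]
      exact ⟨j, Finset.mem_range.2 hjn, hp⟩
    have hlt : P < Q := lt_of_le_of_ne hpQ fun hPQ ↦ hyT P hPT (hPQ ▸ hz)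
    calc (j : ℕ∞) + 1 + Order.coheight Q + 1 = j + 1 + (Order.coheight Q + 1) := by ring
      _ ≤ j + 1 + Order.coheight P := by gcongr; exact Order.coheight_add_one_le hlt
      _ ≤ _ := by exact_mod_cast hbound
  · have hbound := h Q (j + 1) fun hC ↦ hQ (hC.quotient_span_singleton hz)
    calc (j : ℕ∞) + 1 + Order.coheight Q + 1 = (j + 1 : ℕ) + 1 + Order.coheight Q := by
          push_cast; ring
      _ ≤ _ := by exact_mod_cast hbound

/-- If `C = R^(t+n) / K` satisfies the Forster-Swan bound `n`, then some linear map
`R^(t+n) → R^t` restricts to a surjection on `K`. -/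
theorem ForsterBound.exists_surjOn_ker [IsNoetherianRing R] {n t : ℕ}
    (h : ForsterBound R C n) (π : (Fin (t + n) → R) →ₗ[R] C) (hπ : Function.Surjective π) :
    ∃ p : (Fin (t + n) → R) →ₗ[R] (Fin t → R), ∀ v, ∃ k, π k = 0 ∧ p k = v := by
  induction n generalizing C with
  | zero =>
    have := h.subsingleton
    exact ⟨LinearMap.id, fun v ↦ ⟨v, Subsingleton.elim _ _, rfl⟩⟩
  | succ n ih =>
    have : Module.Finite R C := Module.Finite.of_surjective π hπ
    let e : (R × (Fin (t + n) → R)) ≃ₗ[R] (Fin (t + (n + 1)) → R) :=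
      Fin.consLinearEquiv R fun _ ↦ R
    let ρ : (R × (Fin (t + n) → R)) →ₗ[R] C := π ∘ₗ e.toLinearMap
    have hρ : Function.Surjective ρ := hπ.comp e.surjective
    let ι := LinearMap.inr R R (Fin (t + n) → R)
    have hdecomp : ∀ b (k : Fin (t + n) → R), ρ (b, k) = ρ (ι k) + b • ρ (1, 0) := by
      intro b k
      rw [← map_smul, ← map_add]
      simp [ι]
    obtain ⟨y, ⟨a, rfl⟩, hC⟩ := h.exists_quotient (LinearMap.range (ρ ∘ₗ ι)) (ρ (1, 0)) (by
      refine eq_top_iff.2 fun x _ ↦ ?_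
      obtain ⟨⟨b, k⟩, rfl⟩ := hρ x
      rw [hdecomp b k]
      exact Submodule.add_mem_sup (LinearMap.mem_range_self (ρ ∘ₗ ι) k)
        (Submodule.smul_mem _ _ (Submodule.mem_span_singleton_self _)))
    have hx : ρ (1, 0) + (ρ ∘ₗ ι) a = ρ (1, a) := by
      rw [hdecomp 1 a, one_smul, add_comm]; rfl
    rw [hx] at hC
    let q := (Submodule.span R {ρ (1, a)}).mkQ
    obtain ⟨p, hp⟩ := ih hC (q ∘ₗ ρ ∘ₗ ι) (by
      intro w
      obtain ⟨x, rfl⟩ := Submodule.mkQ_surjective _ w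
      obtain ⟨⟨b, k⟩, rfl⟩ := hρ x
      refine ⟨k - b • a, (Submodule.Quotient.eq _).2 ?_⟩
      refine Submodule.mem_span_singleton.2 ⟨-b, ?_⟩
      rw [← map_smul]
      change _ = ρ (ι (k - b • a)) - ρ (b, k)
      rw [← map_sub]
      simp [ι])
    refine ⟨p ∘ₗ (LinearMap.snd R R _ - (LinearMap.fst R R _).smulRight a) ∘ₗ e.symm.toLinearMap,
      fun v ↦ ?_⟩
    obtain ⟨k, hk, rfl⟩ := hp v
    obtain ⟨b, hb⟩ := Submodule.mem_span_singleton.1 ((Submodule.Quotient.mk_eq_zero _).1 hk)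
    refine ⟨e (-b, k - b • a), ?_, by simp⟩
    have hsub : ((-b, k - b • a) : R × (Fin (t + n) → R)) = ι k - b • (1, a) := by
      simp [ι]
    change ρ _ = 0
    rw [hsub, map_sub, map_smul, hb]
    exact sub_self _

theorem locallyGenerated_mu [Module.Finite R C] (P : PrimeSpectrum R) :
    LocallyGenerated C P (mu R C) := by
  obtain ⟨s, hs, hspan⟩ := Nat.sInf_mem
    (s := {n : ℕ | ∃ s : Finset C, s.card = n ∧ Submodule.span R (s : Set C) = ⊤})
    (by
      obtain ⟨s, hs⟩ := Module.Finite.fg_top (R := R) (M := C)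
      exact ⟨_, s, rfl, hs⟩)
  exact ⟨s, hs.le, 1, P.asIdeal.one_notMem, fun y ↦ hspan ▸ Submodule.mem_top⟩

theorem ForsterBound.of_locallyGenerated {d s : ℕ} (hd : ringKrullDim R = d)
    (hs : ∀ P : PrimeSpectrum R, LocallyGenerated C P s) : ForsterBound R C (s + d) := by
  intro P j hj
  have hjs : j + 1 ≤ s := by
    by_contra! hlt
    exact hj ((hs P).mono (by omega))
  have hP : Order.coheight P ≤ (d : ℕ∞) := by
    have := Order.coheight_le_krullDim P
    rw [← ringKrullDim, hd] at this
    exact_mod_cast this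
  push_cast
  gcongr
  exact_mod_cast hjs

variable (R C) in
theorem bddAbove_freeSummandRanks [Nontrivial R] [Module.Finite R C] :
    BddAbove {n : ℕ | ∃ N N' : Submodule R C, IsCompl N N' ∧ Nonempty (N ≃ₗ[R] (Fin n → R))} := by
  obtain ⟨k, π, hπ⟩ := Module.Finite.exists_fin' R C
  refine ⟨k, ?_⟩
  rintro n ⟨N, N', hN, ⟨e⟩⟩
  exact le_of_fin_surjective R (e.toLinearMap ∘ₗ N.projectionOnto N' hN ∘ₗ π)
    (e.surjective.comp ((Submodule.projectionOnto_surjective hN).comp hπ))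

theorem exists_surjective_frk [Nontrivial R] [Module.Finite R C] :
    ∃ p : C →ₗ[R] (Fin (frk R C) → R), Function.Surjective p := by
  obtain ⟨N, N', hN, ⟨e⟩⟩ := Nat.sSup_mem
    (s := {n : ℕ | ∃ N N' : Submodule R C, IsCompl N N' ∧ Nonempty (N ≃ₗ[R] (Fin n → R))})
    ⟨0, ⊥, ⊤, isCompl_bot_top, ⟨0⟩⟩ (bddAbove_freeSummandRanks R C)
  exact ⟨e.toLinearMap ∘ₗ N.projectionOnto N' hN,
    e.surjective.comp (Submodule.projectionOnto_surjective hN)⟩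

theorem le_frk_of_surjective [Nontrivial R] [Module.Finite R C] {n : ℕ}
    (p : C →ₗ[R] (Fin n → R)) (hp : Function.Surjective p) : n ≤ frk R C := by
  obtain ⟨i, hi⟩ := Module.projective_lifting_property p LinearMap.id hp
  have hpi : ∀ v, p (i v) = v := LinearMap.congr_fun hi
  have hcompl : IsCompl (LinearMap.range i) (LinearMap.ker p) := by
    refine ⟨Submodule.disjoint_def.2 ?_, codisjoint_iff_le_sup.2 fun x _ ↦ ?_⟩
    · rintro _ ⟨v, rfl⟩ hv
      rw [LinearMap.mem_ker, hpi] at hv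
      rw [hv, map_zero]
    · rw [← add_sub_cancel (i (p x)) x]
      exact Submodule.add_mem_sup ⟨p x, rfl⟩ (by simp [hpi])
  exact le_csSup (bddAbove_freeSummandRanks R C)
    ⟨LinearMap.range i, LinearMap.ker p, hcompl,
      ⟨(LinearEquiv.ofInjective i (Function.LeftInverse.injective hpi)).symm⟩⟩

end FreeRank

open FreeRank in
/-- For a right exact sequence `M' → M → M'' → 0` of finitely generated modules over a
Noetherian ring of finite Krull dimension `d`, `frk(M) ≤ frk(M') + μ(M'') + d`. -/
theorem frk_right_exact_global {R : Type*} [CommRing R] [IsNoetherianRing R] (d : ℕ)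
    (hd : ringKrullDim R = d)
    {M' M M'' : Type*} [AddCommGroup M'] [Module R M'] [AddCommGroup M] [Module R M]
    [AddCommGroup M''] [Module R M''] [Module.Finite R M'] [Module.Finite R M]
    [Module.Finite R M''] (f : M' →ₗ[R] M) (g : M →ₗ[R] M'')
    (hg : Function.Surjective g) (hexact : Function.Exact f g) :
    frk R M ≤ frk R M' + mu R M'' + d := by
  have : Nontrivial R := by
    by_contra hR
    rw [not_nontrivial_iff_subsingleton] at hR
    simp [ringKrullDim_eq_bot_of_subsingleton] at hd
  by_contra! hlt
  obtain ⟨t, ht, hlt⟩ : ∃ t, frk R M = t + (mu R M'' + d) ∧ frk R M' < t :=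
    ⟨frk R M - (mu R M'' + d), by omega, by omega⟩
  obtain ⟨p, hp⟩ : ∃ p : M →ₗ[R] (Fin (t + (mu R M'' + d)) → R), Function.Surjective p :=
    ht ▸ exists_surjective_frk
  let π := (LinearMap.range (p ∘ₗ f)).mkQ
  have hπ : Function.Surjective π := Submodule.mkQ_surjective _
  have hker : LinearMap.ker g ≤ LinearMap.ker (π ∘ₗ p) := by
    intro m hm
    obtain ⟨m', rfl⟩ := (hexact m).1 hm
    exact (Submodule.Quotient.mk_eq_zero _).2 ⟨m', rfl⟩
  let q : M'' →ₗ[R] _ :=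
    (LinearMap.ker g).liftQ (π ∘ₗ p) hker ∘ₗ (g.quotKerEquivOfSurjective hg).symm.toLinearMap
  have hlift : Function.Surjective ((LinearMap.ker g).liftQ (π ∘ₗ p) hker) := by
    rw [← LinearMap.range_eq_top, Submodule.range_liftQ, LinearMap.range_eq_top]
    exact hπ.comp hp
  have hq : Function.Surjective q :=
    hlift.comp (g.quotKerEquivOfSurjective hg).symm.surjective
  have hC := ForsterBound.of_locallyGenerated hd fun P ↦ (locallyGenerated_mu P).map q hq
  obtain ⟨u, hu⟩ := hC.exists_surjOn_ker π hπ
  refine hlt.not_ge (le_frk_of_surjective (u ∘ₗ p ∘ₗ f) fun v ↦ ?_)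
  obtain ⟨k, hk, rfl⟩ := hu v
  obtain ⟨m', rfl⟩ := (Submodule.Quotient.mk_eq_zero _).1 hk
  exact ⟨m', rfl⟩
end
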